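/- arXiv:2303.15088 — 4 statements merged into one kernel-verified Lean document; each statement's English description precedes it below -/
import Mathlib

section
/- Let f : V × V → W be an object of SSKE of dimension (m | n) (dim V₀ = m, dim V₁ = n) and rank (C(m,2) + C(n+1,2) | mn), i.e., dim W₀ = m(m−1)/2 + n(n+1)/2 and dim W₁ = mn. Then the associated Lie superalgebra L_f is a generalized Heisenberg Lie superalgebra, i.e., Z(L_f) = L_f² = 0 ⊕ W, of dimension (C(m+1,2) + C(n+1,2) | mn + n), i.e., dim (L_f)₀ = m(m+1)/2 + n(n+1)/2 and dim (L_f)₁ = mn + n, and its derived subalgebra has dimension (C(m,2) + C(n+1,2) | mn). -/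
open TensorProduct

noncomputable section

/-- The sign `(−1)^{σ·τ}` (for degrees `σ τ : ℤ/2`) as an element of the field `F`. -/
def ssign (F : Type*) [Field F] (σ τ : ZMod 2) : F := (-1 : F) ^ (σ * τ).val

variable {F V W L : Type*}

section Defs

variable [Field F] [AddCommGroup V] [Module F V] [AddCommGroup W] [Module F W]
  [AddCommGroup L] [Module F L]

/-- `f : V × V → W` is an object of the category `SSKE`: a grading-preserving
skew-supersymmetric bilinear map between superspaces whose image spans `W`. -/
structure IsSSKE (gV : ZMod 2 → Submodule F V) (gW : ZMod 2 → Submodule F W)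
    (f : V →ₗ[F] V →ₗ[F] W) : Prop where
  internalV : DirectSum.IsInternal gV
  internalW : DirectSum.IsInternal gW
  grading : ∀ σ τ : ZMod 2, ∀ u ∈ gV σ, ∀ v ∈ gV τ, f u v ∈ gW (σ + τ)
  skew : ∀ σ τ : ZMod 2, ∀ u ∈ gV σ, ∀ v ∈ gV τ, f u v = -(ssign F σ τ) • f v u
  span_eq_top : Submodule.span F {w : W | ∃ u v : V, f u v = w} = ⊤

/-- A subspace `U` of a superspace is graded: `U = (U ∩ V₀) ⊕ (U ∩ V₁)`. -/
def IsGradedSub (gV : ZMod 2 → Submodule F V) (U : Submodule F V) : Prop :=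
  U = U ⊓ gV 0 ⊔ U ⊓ gV 1

/-- The subspace `X_g` of `V ⊗ W` (for the restriction of `g` to a subspace `U` of `V`),
spanned by all `(−1)^{|a||c|} a ⊗ g(b,c) + (−1)^{|b||a|} b ⊗ g(c,a) + (−1)^{|c||b|} c ⊗ g(a,b)`
with `a, b, c` homogeneous elements of `U`. For `U = ⊤` this is `X_g` itself. -/
def XFr (gV : ZMod 2 → Submodule F V) (U : Submodule F V)
    (g : V →ₗ[F] V →ₗ[F] W) : Submodule F (V ⊗[F] W) :=
  Submodule.span F {z : V ⊗[F] W | ∃ σ τ ρ : ZMod 2, ∃ a ∈ U ⊓ gV σ, ∃ b ∈ U ⊓ gV τ,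
    ∃ c ∈ U ⊓ gV ρ,
    z = ssign F σ ρ • (a ⊗ₜ[F] g b c) + ssign F τ σ • (b ⊗ₜ[F] g c a)
      + ssign F ρ τ • (c ⊗ₜ[F] g a b)}

/-- The epicenter `Z*(g)` of (the restriction to a subspace `U` of) a
skew-supersymmetric bilinear map `g`: all `w = g(u,v)` with `u, v` homogeneous in `U`
such that `(−1)^{|x||v|} x ⊗ w ∈ X_g` for every homogeneous `x ∈ U`. -/
def Zstar (gV : ZMod 2 → Submodule F V) (U : Submodule F V)
    (g : V →ₗ[F] V →ₗ[F] W) : Set W :=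
  {w : W | ∃ σ τ : ZMod 2, ∃ u ∈ U ⊓ gV σ, ∃ v ∈ U ⊓ gV τ, w = g u v ∧
    ∀ ρ : ZMod 2, ∀ x ∈ U ⊓ gV ρ, ssign F ρ τ • (x ⊗ₜ[F] w) ∈ XFr gV U g}

/-- The subspace `U ⊗ T` of `V ⊗ W`. -/
def tensSpan (U : Submodule F V) (T : Submodule F W) : Submodule F (V ⊗[F] W) :=
  Submodule.span F {z : V ⊗[F] W | ∃ u ∈ U, ∃ t ∈ T, z = u ⊗ₜ[F] t}

/-- The bracket of the Lie superalgebra `L_f = V ⊕ W`: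
`[(v,w),(v′,w′)] = (0, f(v,v′))`. -/
def superBracket (f : V →ₗ[F] V →ₗ[F] W) :
    (V × W) →ₗ[F] (V × W) →ₗ[F] (V × W) :=
  ((f.compl₂ (LinearMap.fst F V W)).compr₂ (LinearMap.inr F V W)).comp
    (LinearMap.fst F V W)

/-- The derived subalgebra `L² `: the span of all brackets. -/
def derivedSub (B : L →ₗ[F] L →ₗ[F] L) : Submodule F L :=
  Submodule.span F {z : L | ∃ x y : L, z = B x y}

/-- The span of all brackets of elements of a subspace `P`. -/
def derivedOn (B : L →ₗ[F] L →ₗ[F] L) (P : Submodule F L) : Submodule F L :=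
  Submodule.span F {z : L | ∃ x ∈ P, ∃ y ∈ P, z = B x y}

/-- The axioms of a Lie superalgebra: `L` with grading `gL`, an internal direct sum,
and a bilinear bracket `B` which preserves the grading and satisfies graded
skew-symmetry and the graded Jacobi identity. -/
structure IsLieSuper (gL : ZMod 2 → Submodule F L) (B : L →ₗ[F] L →ₗ[F] L) : Prop where
  internal : DirectSum.IsInternal gL
  grading : ∀ σ τ : ZMod 2, ∀ x ∈ gL σ, ∀ y ∈ gL τ, B x y ∈ gL (σ + τ)
  skew : ∀ σ τ : ZMod 2, ∀ x ∈ gL σ, ∀ y ∈ gL τ, B x y = -(ssign F σ τ) • B y x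
  jacobi : ∀ σ τ ρ : ZMod 2, ∀ x ∈ gL σ, ∀ y ∈ gL τ, ∀ z ∈ gL ρ,
    ssign F σ ρ • B x (B y z) + ssign F τ σ • B y (B z x)
      + ssign F ρ τ • B z (B x y) = 0

end Defs

section Helpers

variable [Field F] [AddCommGroup V] [Module F V] [AddCommGroup W] [Module F W]

theorem aux_isCompl {g : ZMod 2 → Submodule F V} (h : DirectSum.IsInternal g) :
    IsCompl (g 0) (g 1) := by
  refine (DirectSum.isInternal_submodule_iff_isCompl g (i := 0) (j := 1) (by decide) ?_).1 h
  have h2 : ∀ x : ZMod 2, x = 0 ∨ x = 1 := by decide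
  ext x
  simpa using h2 x

theorem aux_basis [FiniteDimensional F V] {k : ℕ} (hk : Module.finrank F V = k) (z : V)
    (hz : z ≠ 0) : ∃ (b : Module.Basis (Fin k) F V) (i : Fin k), b i = z := by
  have hs : LinearIndepOn F id ({z} : Set V) := LinearIndepOn.singleton hz
  let B := Module.Basis.extend hs
  have : Fintype (hs.extend (Set.subset_univ _)) := FiniteDimensional.fintypeBasisIndex B
  have hc : Fintype.card (hs.extend (Set.subset_univ _)) = k := by
    rw [← hk, Module.finrank_eq_card_basis B]
  let e := Fintype.equivFinOfCardEq hc
  refine ⟨B.reindex e, e ⟨z, hs.subset_extend _ rfl⟩, ?_⟩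
  simp [B, Module.Basis.extend_apply_self]

/-- the spanning family of `W` -/
def auxFam {m n : ℕ} (f : V →ₗ[F] V →ₗ[F] W) (b : Fin m → V) (c : Fin n → V) :
    ({s : Sym2 (Fin m) // ¬ s.IsDiag} ⊕ Sym2 (Fin n)) ⊕ (Fin m × Fin n) → W
  | .inl (.inl s) => f (b s.1.out.1) (b s.1.out.2)
  | .inl (.inr s) => f (c s.out.1) (c s.out.2)
  | .inr p => f (b p.1) (c p.2)

theorem aux_out {k : ℕ} (i j : Fin k) :
    ((s(i, j)).out.1 = i ∧ (s(i, j)).out.2 = j) ∨ ((s(i, j)).out.1 = j ∧ (s(i, j)).out.2 = i) := by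
  have h : s((s(i, j)).out.1, (s(i, j)).out.2) = s(i, j) := Quot.out_eq _
  simpa only [Sym2.eq_iff] using h

theorem aux_indep [FiniteDimensional F V] [FiniteDimensional F W] (hchar2 : (2 : F) ≠ 0)
    {gV : ZMod 2 → Submodule F V} {gW : ZMod 2 → Submodule F W}
    {f : V →ₗ[F] V →ₗ[F] W} (hf : IsSSKE gV gW f) {m n : ℕ}
    (hW0 : Module.finrank F ↥(gW 0) = m.choose 2 + (n + 1).choose 2)
    (hW1 : Module.finrank F ↥(gW 1) = m * n)
    (b : Module.Basis (Fin m) F (gV 0)) (c : Module.Basis (Fin n) F (gV 1)) :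
    LinearIndependent F (auxFam f (fun i => (b i : V)) (fun i => (c i : V))) := by
  classical
  set G := auxFam f (fun i => (b i : V)) (fun i => (c i : V)) with hG
  have h00 : ∀ u ∈ gV 0, ∀ v ∈ gV 0, f u v = - f v u := by
    intro u hu v hv
    simpa [ssign] using hf.skew 0 0 u hu v hv
  have h01 : ∀ u ∈ gV 1, ∀ v ∈ gV 0, f u v = - f v u := by
    intro u hu v hv
    simpa [ssign] using hf.skew 1 0 u hu v hv
  have h11 : ∀ u ∈ gV 1, ∀ v ∈ gV 1, f u v = f v u := by
    intro u hu v hv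
    have := hf.skew 1 1 u hu v hv
    have e : (1 : ZMod 2).val = 1 := rfl
    simpa [ssign, e] using this
  have hself : ∀ u ∈ gV 0, f u u = 0 := by
    intro u hu
    have h := h00 u hu u hu
    have h2 : (2 : F) • f u u = 0 := by
      rw [two_smul]; nth_rewrite 1 [h]; simp
    exact (smul_eq_zero.1 h2).resolve_left hchar2
  set S := Submodule.span F (Set.range G) with hS
  have mem : ∀ x, G x ∈ S := fun x => Submodule.subset_span ⟨x, rfl⟩
  have mbb : ∀ i j, f (b i) (b j) ∈ S := by
    intro i j
    by_cases hij : i = j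
    · subst hij; rw [hself _ (b i).2]; exact S.zero_mem
    · have := mem (.inl (.inl ⟨s(i, j), by simpa using hij⟩))
      simp only [hG, auxFam] at this
      rcases aux_out i j with ⟨h1, h2⟩ | ⟨h1, h2⟩
      · rwa [h1, h2] at this
      · rw [h1, h2] at this
        rw [h00 _ (b i).2 _ (b j).2]
        exact S.neg_mem this
  have mcc : ∀ i j, f (c i) (c j) ∈ S := by
    intro i j
    have := mem (.inl (.inr s(i, j)))
    simp only [hG, auxFam] at this
    rcases aux_out i j with ⟨h1, h2⟩ | ⟨h1, h2⟩
    · rwa [h1, h2] at this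
    · rw [h1, h2] at this
      rwa [h11 _ (c i).2 _ (c j).2]
  have mbc : ∀ i j, f (b i) (c j) ∈ S := fun i j => mem (.inr (i, j))
  have mcb : ∀ i j, f (c i) (b j) ∈ S := by
    intro i j
    rw [h01 _ (c i).2 _ (b j).2]
    exact S.neg_mem (mbc j i)
  have hVspan : ∀ P : Submodule F V, (∀ i, (b i : V) ∈ P) → (∀ i, (c i : V) ∈ P) → P = ⊤ := by
    intro P hb hc
    rw [eq_top_iff, ← (aux_isCompl hf.internalV).sup_eq_top]
    refine sup_le ?_ ?_
    · intro v hv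
      have := b.sum_repr ⟨v, hv⟩
      have h2 := congrArg (Subtype.val) this
      simp only [Submodule.coe_sum, Submodule.coe_smul] at h2
      rw [← h2]
      exact P.sum_mem fun i _ => P.smul_mem _ (hb i)
    · intro v hv
      have := c.sum_repr ⟨v, hv⟩
      have h2 := congrArg (Subtype.val) this
      simp only [Submodule.coe_sum, Submodule.coe_smul] at h2
      rw [← h2]
      exact P.sum_mem fun i _ => P.smul_mem _ (hc i)
  have key : ∀ u, (∀ i, f u (b i) ∈ S) → (∀ i, f u (c i) ∈ S) → ∀ v, f u v ∈ S := by
    intro u h1 h2 v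
    have : S.comap (f u) = ⊤ := hVspan _ h1 h2
    have hv : v ∈ S.comap (f u) := this ▸ Submodule.mem_top
    exact hv
  have key2 : ∀ v, (∀ i, f (b i) v ∈ S) → (∀ i, f (c i) v ∈ S) → ∀ u, f u v ∈ S := by
    intro v h1 h2 u
    have : S.comap (f.flip v) = ⊤ := hVspan _ h1 h2
    have hv : u ∈ S.comap (f.flip v) := this ▸ Submodule.mem_top
    exact hv
  have all : ∀ u v, f u v ∈ S := fun u v =>
    key2 v (fun i => key _ (mbb i) (mbc i) v) (fun i => key _ (mcb i) (mcc i) v) u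
  have top : ⊤ ≤ S := by
    rw [← hf.span_eq_top, Submodule.span_le]
    rintro w ⟨u, v, rfl⟩
    exact all u v
  refine linearIndependent_of_top_le_span_of_card_eq_finrank top ?_
  rw [← Submodule.finrank_add_eq_of_isCompl (aux_isCompl hf.internalW), hW0, hW1]
  simp [Sym2.card_subtype_not_diag, Sym2.card, -Fintype.card_subtype_compl]

theorem aux_ker [FiniteDimensional F V] [FiniteDimensional F W] [Nontrivial W]
    (hchar2 : (2 : F) ≠ 0)
    {gV : ZMod 2 → Submodule F V} {gW : ZMod 2 → Submodule F W}
    {f : V →ₗ[F] V →ₗ[F] W} (hf : IsSSKE gV gW f) {m n : ℕ}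
    (hV0 : Module.finrank F ↥(gV 0) = m) (hV1 : Module.finrank F ↥(gV 1) = n)
    (hW0 : Module.finrank F ↥(gW 0) = m.choose 2 + (n + 1).choose 2)
    (hW1 : Module.finrank F ↥(gW 1) = m * n)
    (z : V) (hz : ∀ x, f z x = 0) : z = 0 := by
  have cV := aux_isCompl hf.internalV
  have cW := aux_isCompl hf.internalW
  obtain ⟨z0, hz0, z1, hz1, rfl⟩ := Submodule.mem_sup.1
    (show z ∈ gV 0 ⊔ gV 1 by rw [cV.sup_eq_top]; trivial)
  have dis : ∀ p ∈ gW 0, ∀ q ∈ gW 1, p + q = 0 → p = 0 ∧ q = 0 := by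
    intro p hp q hq h
    have hpq : p = -q := eq_neg_of_add_eq_zero_left h
    have : p = 0 := Submodule.disjoint_def.1 cW.disjoint p hp (hpq ▸ Submodule.neg_mem _ hq)
    refine ⟨this, ?_⟩
    simpa [this] using h
  have e11 : (1 : ZMod 2) + 1 = 0 := by decide
  have hx0 : ∀ x ∈ gV 0, f z0 x = 0 ∧ f z1 x = 0 := by
    intro x hx
    refine dis _ (by simpa using hf.grading 0 0 z0 hz0 x hx) _
      (by simpa using hf.grading 1 0 z1 hz1 x hx) ?_
    simpa using hz x
  have hx1 : ∀ x ∈ gV 1, f z1 x = 0 ∧ f z0 x = 0 := by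
    intro x hx
    refine dis _ (by simpa [e11] using hf.grading 1 1 z1 hz1 x hx) _
      (by simpa using hf.grading 0 1 z0 hz0 x hx) ?_
    have := hz x
    simp only [map_add, LinearMap.add_apply] at this
    rwa [add_comm]
  have z1z : z1 = 0 := by
    by_contra hne
    obtain ⟨c, i, hc⟩ := aux_basis hV1 ⟨z1, hz1⟩ (by simpa using hne)
    have b := Module.finBasisOfFinrankEq F _ hV0
    refine (aux_indep hchar2 hf hW0 hW1 b c).ne_zero (.inl (.inr s(i, i))) ?_
    rcases aux_out i i with ⟨h1, h2⟩ | ⟨h1, h2⟩ <;>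
    · simp only [auxFam, h1, h2, hc]
      exact (hx1 z1 hz1).1
  have z0z : z0 = 0 := by
    by_contra hne
    obtain ⟨b, i, hb⟩ := aux_basis hV0 ⟨z0, hz0⟩ (by simpa using hne)
    have c := Module.finBasisOfFinrankEq F _ hV1
    have ind := aux_indep hchar2 hf hW0 hW1 b c
    by_cases hn : n = 0
    · by_cases hj : ∃ j, i ≠ j
      · obtain ⟨j, hj⟩ := hj
        refine ind.ne_zero (.inl (.inl ⟨s(i, j), by simpa using hj⟩)) ?_
        rcases aux_out i j with ⟨h1, h2⟩ | ⟨h1, h2⟩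
        · simp only [auxFam, h1, h2, hb]
          exact (hx0 _ (b j).2).1
        · simp only [auxFam, h1, h2, hb]
          have := hf.skew 0 0 _ (b j).2 z0 hz0
          rw [this, (hx0 _ (b j).2).1, smul_zero]
      · push Not at hj
        have hm : m ≤ 1 := by
          have : Subsingleton (Fin m) := ⟨fun a b => (hj a).symm.trans (hj b)⟩
          simpa using Fintype.card_le_one_iff_subsingleton.2 this
        have h := Submodule.finrank_add_eq_of_isCompl cW
        have hp : 0 < Module.finrank F W := Module.finrank_pos
        have : m.choose 2 = 0 := Nat.choose_eq_zero_of_lt (by omega)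
        rw [hW0, hW1, this, hn] at h
        simp at h
        omega
    · refine ind.ne_zero (.inr (i, ⟨0, Nat.pos_of_ne_zero hn⟩)) ?_
      simp only [auxFam, hb]
      exact (hx1 _ (c _).2).2
  rw [z0z, z1z, add_zero]

theorem aux_finrank_prod [FiniteDimensional F V] [FiniteDimensional F W]
    (P : Submodule F V) (Q : Submodule F W) :
    Module.finrank F ↥(P.prod Q) = Module.finrank F P + Module.finrank F Q := by
  rw [← Module.finrank_prod]
  refine LinearEquiv.finrank_eq
    { toFun := fun x => (⟨x.1.1, x.2.1⟩, ⟨x.1.2, x.2.2⟩)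
      invFun := fun y => ⟨(y.1.1, y.2.1), ⟨y.1.2, y.2.2⟩⟩
      map_add' := fun _ _ => rfl
      map_smul' := fun _ _ => rfl
      left_inv := fun _ => rfl
      right_inv := fun _ => rfl }

theorem aux_derived (f : V →ₗ[F] V →ₗ[F] W)
    (h : Submodule.span F {w : W | ∃ u v : V, f u v = w} = ⊤) :
    derivedSub (superBracket f) = (⊥ : Submodule F V).prod (⊤ : Submodule F W) := by
  have : {z : V × W | ∃ x y : V × W, z = superBracket f x y}
      = LinearMap.inr F V W '' {w : W | ∃ u v : V, f u v = w} := by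
    ext z
    constructor
    · rintro ⟨x, y, rfl⟩
      exact ⟨_, ⟨x.1, y.1, rfl⟩, rfl⟩
    · rintro ⟨_, ⟨u, v, rfl⟩, rfl⟩
      exact ⟨(u, 0), (v, 0), rfl⟩
  rw [derivedSub, this, Submodule.span_image, h]
  ext ⟨v, w⟩
  simp [Submodule.mem_prod, eq_comm]

end Helpers

/-- If `f` has dimension `(m | n)` and rank
`(C(m,2) + C(n+1,2) | mn)`, then `L_f` is a generalized Heisenberg Lie
superalgebra (`Z(L_f) = L_f² = 0 ⊕ W`) of dimension
`(C(m+1,2) + C(n+1,2) | mn + n)` whose derived subalgebra has dimension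
`(C(m,2) + C(n+1,2) | mn)`. -/
theorem stmt4 [Field F] [AddCommGroup V] [Module F V] [AddCommGroup W] [Module F W]
    [FiniteDimensional F V] [FiniteDimensional F W] [Nontrivial V] [Nontrivial W]
    (hchar2 : (2 : F) ≠ 0) (hchar3 : (3 : F) ≠ 0)
    (gV : ZMod 2 → Submodule F V) (gW : ZMod 2 → Submodule F W)
    (f : V →ₗ[F] V →ₗ[F] W) (hf : IsSSKE gV gW f)
    (m n : ℕ)
    (hV0 : Module.finrank F ↥(gV 0) = m) (hV1 : Module.finrank F ↥(gV 1) = n)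
    (hW0 : Module.finrank F ↥(gW 0) = m.choose 2 + (n + 1).choose 2)
    (hW1 : Module.finrank F ↥(gW 1) = m * n) :
    derivedSub (superBracket f) = (⊥ : Submodule F V).prod (⊤ : Submodule F W) ∧
    {z : V × W | ∀ x : V × W, superBracket f z x = 0}
      = (derivedSub (superBracket f) : Set (V × W)) ∧
    Module.finrank F ↥((gV 0).prod (gW 0)) = (m + 1).choose 2 + (n + 1).choose 2 ∧
    Module.finrank F ↥((gV 1).prod (gW 1)) = m * n + n ∧
    Module.finrank F ↥(derivedSub (superBracket f) ⊓ (gV 0).prod (gW 0))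
      = m.choose 2 + (n + 1).choose 2 ∧
    Module.finrank F ↥(derivedSub (superBracket f) ⊓ (gV 1).prod (gW 1)) = m * n := by
  have hd := aux_derived f hf.span_eq_top
  have hi : ∀ σ, derivedSub (superBracket f) ⊓ (gV σ).prod (gW σ)
      = (⊥ : Submodule F V).prod (gW σ) := by
    intro σ
    rw [hd]
    ext ⟨v, w⟩
    simp only [Submodule.mem_inf, Submodule.mem_prod, Submodule.mem_bot, Submodule.mem_top]
    constructor
    · rintro ⟨⟨h1, _⟩, _, h3⟩
      exact ⟨h1, h3⟩
    · rintro ⟨rfl, h3⟩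
      exact ⟨⟨rfl, trivial⟩, Submodule.zero_mem _, h3⟩
  refine ⟨hd, ?_, ?_, ?_, ?_, ?_⟩
  · rw [hd]
    ext ⟨v, w⟩
    simp only [Set.mem_setOf_eq, SetLike.mem_coe, Submodule.mem_prod, Submodule.mem_bot,
      Submodule.mem_top, and_true]
    constructor
    · intro h
      refine aux_ker hchar2 hf hV0 hV1 hW0 hW1 v fun x => ?_
      exact congrArg Prod.snd (h (x, 0))
    · rintro rfl x
      simp [superBracket]
  · rw [aux_finrank_prod, hV0, hW0, Nat.choose_succ_succ' m 1, Nat.choose_one_right, add_assoc]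
  · rw [aux_finrank_prod, hV1, hW1, add_comm]
  · rw [hi, aux_finrank_prod, hW0, finrank_bot, zero_add]
  · rw [hi, aux_finrank_prod, hW1, finrank_bot, zero_add]
end
end

section
/- Let f : V × V → W be a decomposable object of SSKE with V = V̄₁ ⊕ V̄₂, f(V̄₁, V̄₂) = 0, W̄ᵢ the span of f(V̄ᵢ, V̄ᵢ), and f̄ᵢ the restriction of f to V̄ᵢ × V̄ᵢ. Then, as subspaces of V ⊗ W, X_f = X_{f̄₁} + X_{f̄₂} + V̄₁ ⊗ W̄₂ + V̄₂ ⊗ W̄₁, where X_{f̄ᵢ} ⊆ V̄ᵢ ⊗ W̄ᵢ ⊆ V ⊗ W via the canonical inclusions. -/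
open TensorProduct

noncomputable section

variable {F V W L : Type*}

theorem graded_split [Field F] [AddCommGroup V] [Module F V]
    {gV : ZMod 2 → Submodule F V} {U : Submodule F V} (hU : IsGradedSub gV U)
    {v : V} (hv : v ∈ U) : ∃ p : ZMod 2 → V, (∀ σ, p σ ∈ U ⊓ gV σ) ∧ v = p 0 + p 1 := by
  rw [hU] at hv
  obtain ⟨x, hx, y, hy, rfl⟩ := Submodule.mem_sup.1 hv
  refine ⟨fun σ => if σ = 0 then x else y, ?_, by simp⟩
  intro σ
  have hσ : σ = 0 ∨ σ = 1 := (by decide : ∀ σ : ZMod 2, σ = 0 ∨ σ = 1) σ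
  rcases hσ with rfl | rfl
  · simpa using hx
  · simpa using hy

theorem homog_split [Field F] [AddCommGroup V] [Module F V]
    {gV : ZMod 2 → Submodule F V} (hint : DirectSum.IsInternal gV)
    {V1 V2 : Submodule F V} (h1 : IsGradedSub gV V1) (h2 : IsGradedSub gV V2)
    (hc : IsCompl V1 V2) {σ : ZMod 2} {a : V} (ha : a ∈ gV σ) :
    ∃ a1 ∈ V1 ⊓ gV σ, ∃ a2 ∈ V2 ⊓ gV σ, a = a1 + a2 := by
  have hdis : Disjoint (gV 0) (gV 1) :=
    hint.submodule_iSupIndep.pairwiseDisjoint (by decide)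
  have hatop : a ∈ V1 ⊔ V2 := by rw [hc.sup_eq_top]; trivial
  obtain ⟨x, hx, y, hy, hxy⟩ := Submodule.mem_sup.1 hatop
  obtain ⟨p, hp, hpx⟩ := graded_split h1 hx
  obtain ⟨q, hq, hqy⟩ := graded_split h2 hy
  refine ⟨p σ, hp σ, q σ, hq σ, ?_⟩
  have e : a = (p 0 + q 0) + (p 1 + q 1) := by rw [← hxy, hpx, hqy]; abel
  have m : ∀ τ, p τ + q τ ∈ gV τ := fun τ => add_mem (hp τ).2 (hq τ).2
  rw [Submodule.disjoint_def] at hdis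
  have hσ : σ = 0 ∨ σ = 1 := (by decide : ∀ σ : ZMod 2, σ = 0 ∨ σ = 1) σ
  rcases hσ with rfl | rfl
  · have : p 1 + q 1 = a - (p 0 + q 0) := by rw [e]; abel
    have := hdis (p 1 + q 1) (this ▸ sub_mem ha (m 0)) (m 1)
    rw [e, this, add_zero]
  · have : p 0 + q 0 = a - (p 1 + q 1) := by rw [e]; abel
    have := hdis (p 0 + q 0) (m 0) (this ▸ sub_mem ha (m 1))
    rw [e, this, zero_add]

theorem ssign_ne_zero' [Field F] (σ τ : ZMod 2) : ssign F σ τ ≠ 0 :=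
  pow_ne_zero _ (neg_ne_zero.2 one_ne_zero)

theorem XFr_mono' [Field F] [AddCommGroup V] [Module F V] [AddCommGroup W] [Module F W]
    (gV : ZMod 2 → Submodule F V) (U : Submodule F V) (f : V →ₗ[F] V →ₗ[F] W) :
    XFr gV U f ≤ XFr gV ⊤ f := by
  refine Submodule.span_mono ?_
  rintro z ⟨σ, τ, ρ, a, ha, b, hb, c, hc, rfl⟩
  exact ⟨σ, τ, ρ, a, ⟨trivial, ha.2⟩, b, ⟨trivial, hb.2⟩, c, ⟨trivial, hc.2⟩, rfl⟩

theorem cross_zero [Field F] [AddCommGroup V] [Module F V] [AddCommGroup W] [Module F W]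
    {gV : ZMod 2 → Submodule F V} {gW : ZMod 2 → Submodule F W}
    {f : V →ₗ[F] V →ₗ[F] W} (hf : IsSSKE gV gW f) {V1 V2 : Submodule F V}
    (h1 : IsGradedSub gV V1) (h2 : IsGradedSub gV V2)
    (hzero : ∀ u ∈ V1, ∀ v ∈ V2, f u v = 0) : ∀ v ∈ V2, ∀ u ∈ V1, f v u = 0 := by
  intro v hv u hu
  obtain ⟨p, hp, rfl⟩ := graded_split h1 hu
  obtain ⟨q, hq, rfl⟩ := graded_split h2 hv
  have key : ∀ σ τ, f (q σ) (p τ) = 0 := fun σ τ => by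
    rw [hf.skew σ τ _ (hq σ).2 _ (hp τ).2, hzero _ (hp τ).1 _ (hq σ).1, smul_zero]
  simp [key]

theorem tens_le [Field F] [AddCommGroup V] [Module F V] [AddCommGroup W] [Module F W]
    {gV : ZMod 2 → Submodule F V}
    {f : V →ₗ[F] V →ₗ[F] W} {V1 V2 : Submodule F V}
    (h1 : IsGradedSub gV V1) (h2 : IsGradedSub gV V2)
    (hz : ∀ u ∈ V1, ∀ v ∈ V2, f u v = 0) (hz' : ∀ v ∈ V2, ∀ u ∈ V1, f v u = 0) :
    tensSpan V1 (Submodule.span F {w : W | ∃ u ∈ V2, ∃ v ∈ V2, w = f u v})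
      ≤ XFr gV ⊤ f := by
  refine Submodule.span_le.2 ?_
  rintro z ⟨u, hu, t, ht, rfl⟩
  change u ⊗ₜ[F] t ∈ XFr gV ⊤ f
  induction ht using Submodule.span_induction with
  | zero => simp
  | add x y _ _ hx hy => rw [TensorProduct.tmul_add]; exact add_mem hx hy
  | smul r x _ hx => rw [TensorProduct.tmul_smul]; exact Submodule.smul_mem _ _ hx
  | mem x hx =>
    obtain ⟨b, hb, c, hc, rfl⟩ := hx
    obtain ⟨p, hp, rfl⟩ := graded_split h1 hu
    obtain ⟨q, hq, rfl⟩ := graded_split h2 hb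
    obtain ⟨r, hr, rfl⟩ := graded_split h2 hc
    have key : ∀ σ τ ρ, p σ ⊗ₜ[F] f (q τ) (r ρ) ∈ XFr gV ⊤ f := fun σ τ ρ => by
      rw [← Submodule.smul_mem_iff _ (ssign_ne_zero' (F := F) σ ρ)]
      refine Submodule.subset_span ⟨σ, τ, ρ, p σ, ⟨trivial, (hp σ).2⟩, q τ,
        ⟨trivial, (hq τ).2⟩, r ρ, ⟨trivial, (hr ρ).2⟩, ?_⟩
      rw [hz' _ (hr ρ).1 _ (hp σ).1, hz _ (hp σ).1 _ (hq τ).1]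
      simp
    simp only [map_add, LinearMap.add_apply, TensorProduct.tmul_add, TensorProduct.add_tmul]
    repeat' apply add_mem
    all_goals apply key

/-- For a decomposable object `f` of SSKE, inside `V ⊗ W` one has
`X_f = X_{f̄₁} + X_{f̄₂} + V̄₁ ⊗ W̄₂ + V̄₂ ⊗ W̄₁`. -/
theorem stmt8 [Field F] [AddCommGroup V] [Module F V] [AddCommGroup W] [Module F W]
    [FiniteDimensional F V] [FiniteDimensional F W] [Nontrivial V] [Nontrivial W]
    (hchar2 : (2 : F) ≠ 0) (hchar3 : (3 : F) ≠ 0)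
    (gV : ZMod 2 → Submodule F V) (gW : ZMod 2 → Submodule F W)
    (f : V →ₗ[F] V →ₗ[F] W) (hf : IsSSKE gV gW f)
    (V1 V2 : Submodule F V) (hV1ne : V1 ≠ ⊥) (hV2ne : V2 ≠ ⊥)
    (hV1g : IsGradedSub gV V1) (hV2g : IsGradedSub gV V2)
    (hcompl : IsCompl V1 V2)
    (hzero : ∀ u ∈ V1, ∀ v ∈ V2, f u v = 0) :
    ∀ W1 W2 : Submodule F W,
      W1 = Submodule.span F {w : W | ∃ u ∈ V1, ∃ v ∈ V1, w = f u v} →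
      W2 = Submodule.span F {w : W | ∃ u ∈ V2, ∃ v ∈ V2, w = f u v} →
      XFr gV (⊤ : Submodule F V) f
        = XFr gV V1 f ⊔ XFr gV V2 f ⊔ tensSpan V1 W2 ⊔ tensSpan V2 W1 := by
  rintro W1 W2 rfl rfl
  have hz' := cross_zero hf hV1g hV2g hzero
  apply le_antisymm
  · refine Submodule.span_le.2 ?_
    rintro z ⟨σ, τ, ρ, a, ha, b, hb, c, hc, rfl⟩
    obtain ⟨a1, ha1, a2, ha2, rfl⟩ := homog_split hf.internalV hV1g hV2g hcompl ha.2
    obtain ⟨b1, hb1, b2, hb2, rfl⟩ := homog_split hf.internalV hV1g hV2g hcompl hb.2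
    obtain ⟨c1, hc1, c2, hc2, rfl⟩ := homog_split hf.internalV hV1g hV2g hcompl hc.2
    set W1 := Submodule.span F {w : W | ∃ u ∈ V1, ∃ v ∈ V1, w = f u v} with hW1
    set W2 := Submodule.span F {w : W | ∃ u ∈ V2, ∃ v ∈ V2, w = f u v} with hW2
    have hf1 : ∀ x ∈ V1, ∀ y ∈ V1, f x y ∈ W1 := fun x hx y hy =>
      Submodule.subset_span ⟨x, hx, y, hy, rfl⟩
    have hf2 : ∀ x ∈ V2, ∀ y ∈ V2, f x y ∈ W2 := fun x hx y hy =>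
      Submodule.subset_span ⟨x, hx, y, hy, rfl⟩
    have hT1 : ∀ (s : F), ∀ x ∈ V1, ∀ y ∈ V2, ∀ z ∈ V2, s • (x ⊗ₜ[F] f y z) ∈ tensSpan V1 W2 :=
      fun s x hx y hy z hz => Submodule.smul_mem _ _
        (Submodule.subset_span ⟨x, hx, _, hf2 y hy z hz, rfl⟩)
    have hT2 : ∀ (s : F), ∀ x ∈ V2, ∀ y ∈ V1, ∀ z ∈ V1, s • (x ⊗ₜ[F] f y z) ∈ tensSpan V2 W1 :=
      fun s x hx y hy z hz => Submodule.smul_mem _ _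
        (Submodule.subset_span ⟨x, hx, _, hf1 y hy z hz, rfl⟩)
    have hX1 : ssign F σ ρ • (a1 ⊗ₜ[F] f b1 c1) + ssign F τ σ • (b1 ⊗ₜ[F] f c1 a1)
        + ssign F ρ τ • (c1 ⊗ₜ[F] f a1 b1) ∈ XFr gV V1 f :=
      Submodule.subset_span ⟨σ, τ, ρ, a1, ha1, b1, hb1, c1, hc1, rfl⟩
    have hX2 : ssign F σ ρ • (a2 ⊗ₜ[F] f b2 c2) + ssign F τ σ • (b2 ⊗ₜ[F] f c2 a2)
        + ssign F ρ τ • (c2 ⊗ₜ[F] f a2 b2) ∈ XFr gV V2 f :=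
      Submodule.subset_span ⟨σ, τ, ρ, a2, ha2, b2, hb2, c2, hc2, rfl⟩
    have hM1 := add_mem (add_mem (hT1 (ssign F σ ρ) a1 ha1.1 b2 hb2.1 c2 hc2.1)
      (hT1 (ssign F τ σ) b1 hb1.1 c2 hc2.1 a2 ha2.1))
      (hT1 (ssign F ρ τ) c1 hc1.1 a2 ha2.1 b2 hb2.1)
    have hM2 := add_mem (add_mem (hT2 (ssign F σ ρ) a2 ha2.1 b1 hb1.1 c1 hc1.1)
      (hT2 (ssign F τ σ) b2 hb2.1 c1 hc1.1 a1 ha1.1))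
      (hT2 (ssign F ρ τ) c2 hc2.1 a1 ha1.1 b1 hb1.1)
    have hall := Submodule.add_mem_sup (Submodule.add_mem_sup
      (Submodule.add_mem_sup hX1 hX2) hM1) hM2
    have hexp : ∀ x1 ∈ V1, ∀ x2 ∈ V2, ∀ y1 ∈ V1, ∀ y2 ∈ V2,
        f (x1 + x2) (y1 + y2) = f x1 y1 + f x2 y2 := fun x1 h1 x2 h2 y1 k1 y2 k2 => by
      simp [hzero x1 h1 y2 k2, hz' x2 h2 y1 k1]
    rw [SetLike.mem_coe]
    convert hall using 1
    rw [hexp b1 hb1.1 b2 hb2.1 c1 hc1.1 c2 hc2.1, hexp c1 hc1.1 c2 hc2.1 a1 ha1.1 a2 ha2.1,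
      hexp a1 ha1.1 a2 ha2.1 b1 hb1.1 b2 hb2.1]
    simp only [TensorProduct.tmul_add, TensorProduct.add_tmul, smul_add]
    abel
  · exact sup_le (sup_le (sup_le (XFr_mono' gV V1 f) (XFr_mono' gV V2 f))
      (tens_le hV1g hV2g hzero hz')) (tens_le hV2g hV1g hz' hzero)
end
end

section
/- Let f : V × V → W be a decomposable nondegenerate object of SSKE with V = V̄₁ ⊕ V̄₂, f(V̄₁, V̄₂) = 0, W̄ᵢ the span of f(V̄ᵢ, V̄ᵢ), and f̄ᵢ the restriction of f to V̄ᵢ × V̄ᵢ. Assume dim W = 2, W̄₁ = W, and W = W̄₂ ⊕ Ū for a one-dimensional graded subspace Ū; let π : W → Ū be the projection along W̄₂ and set f̃₁ = π ∘ f̄₁ : V̄₁ × V̄₁ → Ū. If f̃₁ is a decomposable object of SSKE, then X_f = X_{f̃₁} + V ⊗ W̄₂ + V̄₂ ⊗ Ū as subspaces of V ⊗ W. -/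
open TensorProduct

noncomputable section

variable {F V W L : Type*}

section Helpers

variable [Field F] [AddCommGroup V] [Module F V] [AddCommGroup W] [Module F W]

theorem gradedSub_induct {gV : ZMod 2 → Submodule F V} {U : Submodule F V}
    (hU : IsGradedSub gV U) (p : V → Prop) (hadd : ∀ x y, p x → p y → p (x + y))
    (hh : ∀ σ, ∀ x ∈ U ⊓ gV σ, p x) (x : V) (hx : x ∈ U) : p x := by
  rw [hU] at hx
  obtain ⟨y, hy, z, hz, rfl⟩ := Submodule.mem_sup.1 hx
  exact hadd _ _ (hh 0 y hy) (hh 1 z hz)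

theorem graded_split_s9 {gV : ZMod 2 → Submodule F V} (hint : DirectSum.IsInternal gV)
    {V1 V2 : Submodule F V} (h1 : IsGradedSub gV V1) (h2 : IsGradedSub gV V2)
    (hc : IsCompl V1 V2) (σ : ZMod 2) (a : V) (ha : a ∈ gV σ) :
    ∃ x ∈ V1 ⊓ gV σ, ∃ y ∈ V2 ⊓ gV σ, a = x + y := by
  have hdisj : Disjoint (gV 0) (gV 1) :=
    hint.submodule_iSupIndep.pairwiseDisjoint (by decide)
  have hat : a ∈ V1 ⊔ V2 := by rw [hc.sup_eq_top]; trivial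
  obtain ⟨x, hx, y, hy, hxy⟩ := Submodule.mem_sup.1 hat
  rw [h1] at hx
  rw [h2] at hy
  obtain ⟨x0, hx0, x1, hx1, rfl⟩ := Submodule.mem_sup.1 hx
  obtain ⟨y0, hy0, y1, hy1, rfl⟩ := Submodule.mem_sup.1 hy
  rw [Submodule.disjoint_def] at hdisj
  have hσ : σ = 0 ∨ σ = 1 := by clear ha; revert σ; decide
  rcases hσ with rfl | rfl
  · have hz : x1 + y1 = 0 := by
      apply hdisj
      · have : x1 + y1 = a - (x0 + y0) := by rw [← hxy]; abel
        rw [this]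
        exact sub_mem ha (add_mem hx0.2 hy0.2)
      · exact add_mem hx1.2 hy1.2
    refine ⟨x0, hx0, y0, hy0, ?_⟩
    have : a = (x0 + y0) + (x1 + y1) := by rw [← hxy]; abel
    rw [this, hz, add_zero]
  · have hz : x0 + y0 = 0 := by
      apply hdisj
      · exact add_mem hx0.2 hy0.2
      · have : x0 + y0 = a - (x1 + y1) := by rw [← hxy]; abel
        rw [this]
        exact sub_mem ha (add_mem hx1.2 hy1.2)
    refine ⟨x1, hx1, y1, hy1, ?_⟩
    have : a = (x0 + y0) + (x1 + y1) := by rw [← hxy]; abel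
    rw [this, hz, zero_add]

theorem ssign_ne (σ τ : ZMod 2) : ssign F σ τ ≠ 0 := by
  unfold ssign
  exact pow_ne_zero _ (neg_ne_zero.2 one_ne_zero)

theorem tmul_mem_tensSpan {U : Submodule F V} {T : Submodule F W} {u : V} {t : W}
    (hu : u ∈ U) (ht : t ∈ T) : u ⊗ₜ[F] t ∈ tensSpan U T :=
  Submodule.subset_span ⟨u, hu, t, ht, rfl⟩

/-- If `A` and `B` are orthogonal graded subspaces, then `B ⊗ span f(A, A) ⊆ X_f`. -/
theorem tens_le_XFr {gV : ZMod 2 → Submodule F V} {f : V →ₗ[F] V →ₗ[F] W}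
    {A B : Submodule F V} (hA : IsGradedSub gV A) (hB : IsGradedSub gV B)
    (h1 : ∀ u ∈ A, ∀ v ∈ B, f u v = 0) (h2 : ∀ u ∈ B, ∀ v ∈ A, f u v = 0) :
    tensSpan B (Submodule.span F {w : W | ∃ u ∈ A, ∃ v ∈ A, w = f u v})
      ≤ XFr gV ⊤ f := by
  have key : ∀ c ∈ B, ∀ a ∈ A, ∀ b ∈ A, c ⊗ₜ[F] f a b ∈ XFr gV ⊤ f := by
    refine gradedSub_induct hB _ ?_ ?_
    · intro x y hx hy a ha b hb
      rw [TensorProduct.add_tmul]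
      exact add_mem (hx a ha b hb) (hy a ha b hb)
    intro ρ c hc
    refine gradedSub_induct hA _ ?_ ?_
    · intro x y hx hy b hb
      rw [map_add, LinearMap.add_apply, TensorProduct.tmul_add]
      exact add_mem (hx b hb) (hy b hb)
    intro σ a ha
    refine gradedSub_induct hA _ ?_ ?_
    · intro x y hx hy
      rw [map_add, TensorProduct.tmul_add]
      exact add_mem hx hy
    intro τ b hb
    rw [← Submodule.smul_mem_iff _ (ssign_ne (F := F) ρ τ)]
    refine Submodule.subset_span ⟨σ, τ, ρ, a, ⟨trivial, ha.2⟩, b, ⟨trivial, hb.2⟩, c,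
      ⟨trivial, hc.2⟩, ?_⟩
    rw [h1 b hb.1 c hc.1, h2 c hc.1 a ha.1]
    simp
  refine Submodule.span_le.2 ?_
  rintro _ ⟨c, hc, t, ht, rfl⟩
  change c ⊗ₜ[F] t ∈ XFr gV ⊤ f
  induction ht using Submodule.span_induction with
  | mem x hx => obtain ⟨a, ha, b, hb, rfl⟩ := hx; exact key c hc a ha b hb
  | zero => simp
  | add x y _ _ hx hy => rw [TensorProduct.tmul_add]; exact add_mem hx hy
  | smul r x _ hx => rw [TensorProduct.tmul_smul]; exact Submodule.smul_mem _ _ hx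

end Helpers

/-- Let `f` be a decomposable nondegenerate object of SSKE with
`dim W = 2`, `W̄₁ = W` and `W = W̄₂ ⊕ Ū` with `Ū` a one-dimensional graded
subspace; let `π : W → W` be the projection onto `Ū` along `W̄₂` and
`f̃₁ = π ∘ f̄₁`. If `f̃₁` is a decomposable object of SSKE, then
`X_f = X_{f̃₁} + V ⊗ W̄₂ + V̄₂ ⊗ Ū` inside `V ⊗ W`. -/
theorem stmt9 [Field F] [AddCommGroup V] [Module F V] [AddCommGroup W] [Module F W]
    [FiniteDimensional F V] [FiniteDimensional F W] [Nontrivial V] [Nontrivial W]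
    (hchar2 : (2 : F) ≠ 0) (hchar3 : (3 : F) ≠ 0)
    (gV : ZMod 2 → Submodule F V) (gW : ZMod 2 → Submodule F W)
    (f : V →ₗ[F] V →ₗ[F] W) (hf : IsSSKE gV gW f)
    (V1 V2 : Submodule F V) (hV1ne : V1 ≠ ⊥) (hV2ne : V2 ≠ ⊥)
    (hV1g : IsGradedSub gV V1) (hV2g : IsGradedSub gV V2)
    (hcompl : IsCompl V1 V2)
    (hzero : ∀ u ∈ V1, ∀ v ∈ V2, f u v = 0)
    (hnd : ∀ u : V, (∀ v : V, f v u = 0) → u = 0)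
    (hrankW : Module.finrank F W = 2) :
    ∀ W1 W2 : Submodule F W,
      W1 = Submodule.span F {w : W | ∃ u ∈ V1, ∃ v ∈ V1, w = f u v} →
      W2 = Submodule.span F {w : W | ∃ u ∈ V2, ∃ v ∈ V2, w = f u v} →
      W1 = ⊤ →
      ∀ (U : Submodule F W) (π : W →ₗ[F] W),
        Module.finrank F ↥U = 1 → IsGradedSub gW U → IsCompl W2 U →
        (∀ w ∈ U, π w = w) → (∀ w ∈ W2, π w = 0) →
        (∃ D1 D2 : Submodule F V, D1 ≠ ⊥ ∧ D2 ≠ ⊥ ∧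
          IsGradedSub gV D1 ∧ IsGradedSub gV D2 ∧
          D1 ⊔ D2 = V1 ∧ D1 ⊓ D2 = ⊥ ∧
          (∀ u ∈ D1, ∀ v ∈ D2, π (f u v) = 0)) →
        Submodule.span F {w : W | ∃ u ∈ V1, ∃ v ∈ V1, w = π (f u v)} = U →
        XFr gV (⊤ : Submodule F V) f
          = XFr gV V1 (f.compr₂ π) ⊔ tensSpan (⊤ : Submodule F V) W2
              ⊔ tensSpan V2 U := by
  intro W1 W2 hW1 hW2 hW1t U π _ _ hWU hπU hπW _ _
  have hzero' : ∀ v ∈ V2, ∀ u ∈ V1, f v u = 0 := by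
    refine gradedSub_induct hV2g _ ?_ ?_
    · intro x y hx hy u hu
      rw [map_add, LinearMap.add_apply, hx u hu, hy u hu, add_zero]
    intro σ v hv
    refine gradedSub_induct hV1g _ ?_ ?_
    · intro x y hx hy
      rw [map_add, hx, hy, add_zero]
    intro τ u hu
    rw [hf.skew σ τ v hv.2 u hu.2, hzero u hu.1 v hv.1, smul_zero]
  have hW1X : tensSpan V2 (⊤ : Submodule F W) ≤ XFr gV ⊤ f := by
    rw [← hW1t, hW1]
    exact tens_le_XFr hV1g hV2g hzero hzero'
  have hW2X : tensSpan V1 W2 ≤ XFr gV ⊤ f := by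
    rw [hW2]
    exact tens_le_XFr hV2g hV1g hzero' hzero
  have hVW2 : tensSpan (⊤ : Submodule F V) W2 ≤ XFr gV ⊤ f := by
    refine Submodule.span_le.2 ?_
    rintro _ ⟨c, -, t, ht, rfl⟩
    have hc : c ∈ V1 ⊔ V2 := by rw [hcompl.sup_eq_top]; trivial
    obtain ⟨x, hx, y, hy, rfl⟩ := Submodule.mem_sup.1 hc
    change (x + y) ⊗ₜ[F] t ∈ XFr gV ⊤ f
    rw [TensorProduct.add_tmul]
    exact add_mem (hW2X (tmul_mem_tensSpan hx ht)) (hW1X (tmul_mem_tensSpan hy trivial))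
  have hsplit : ∀ w : W, w - π w ∈ W2 ∧ π w ∈ U := by
    intro w
    have hw : w ∈ W2 ⊔ U := by rw [hWU.sup_eq_top]; trivial
    obtain ⟨x, hx, y, hy, rfl⟩ := Submodule.mem_sup.1 hw
    rw [map_add, hπW x hx, hπU y hy, zero_add, add_sub_cancel_right]
    exact ⟨hx, hy⟩
  apply le_antisymm
  · set N := tensSpan (⊤ : Submodule F V) W2 ⊔ tensSpan V2 U with hN
    rw [sup_assoc, ← hN]
    have hV2N : ∀ y ∈ V2, ∀ w : W, y ⊗ₜ[F] w ∈ N := by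
      intro y hy w
      have : y ⊗ₜ[F] w = y ⊗ₜ[F] (w - π w) + y ⊗ₜ[F] π w := by
        rw [← TensorProduct.tmul_add, sub_add_cancel]
      rw [this]
      exact Submodule.add_mem_sup (tmul_mem_tensSpan trivial (hsplit w).1)
        (tmul_mem_tensSpan hy (hsplit w).2)
    have hW2N : ∀ x : V, ∀ w ∈ W2, x ⊗ₜ[F] w ∈ N := fun x w hw =>
      Submodule.mem_sup_left (tmul_mem_tensSpan trivial hw)
    have key : ∀ a1 ∈ V1, ∀ a2 ∈ V2, ∀ b1 ∈ V1, ∀ b2 ∈ V2, ∀ c1 ∈ V1, ∀ c2 ∈ V2,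
        (a1 + a2) ⊗ₜ[F] f (b1 + b2) (c1 + c2) - a1 ⊗ₜ[F] π (f b1 c1) ∈ N := by
      intro a1 ha1 a2 ha2 b1 hb1 b2 hb2 c1 hc1 c2 hc2
      have h1 : f (b1 + b2) (c1 + c2) = f b1 c1 + f b2 c2 := by
        simp [hzero b1 hb1 c2 hc2, hzero' b2 hb2 c1 hc1]
      have h2 : (a1 + a2) ⊗ₜ[F] f (b1 + b2) (c1 + c2) - a1 ⊗ₜ[F] π (f b1 c1)
          = a1 ⊗ₜ[F] (f b1 c1 - π (f b1 c1)) + a2 ⊗ₜ[F] f b1 c1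
            + (a1 + a2) ⊗ₜ[F] f b2 c2 := by
        rw [h1]
        simp only [TensorProduct.add_tmul, TensorProduct.tmul_add, TensorProduct.tmul_sub]
        abel
      rw [h2]
      refine add_mem (add_mem (hW2N _ _ (hsplit _).1) (hV2N _ ha2 _)) (hW2N _ _ ?_)
      rw [hW2]
      exact Submodule.subset_span ⟨b2, hb2, c2, hc2, rfl⟩
    refine Submodule.span_le.2 ?_
    rintro _ ⟨σ, τ, ρ, a, ha, b, hb, c, hc, rfl⟩
    obtain ⟨a1, ha1, a2, ha2, rfl⟩ := graded_split_s9 hf.internalV hV1g hV2g hcompl σ a ha.2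
    obtain ⟨b1, hb1, b2, hb2, rfl⟩ := graded_split_s9 hf.internalV hV1g hV2g hcompl τ b hb.2
    obtain ⟨c1, hc1, c2, hc2, rfl⟩ := graded_split_s9 hf.internalV hV1g hV2g hcompl ρ c hc.2
    have hA := key a1 ha1.1 a2 ha2.1 b1 hb1.1 b2 hb2.1 c1 hc1.1 c2 hc2.1
    have hB := key b1 hb1.1 b2 hb2.1 c1 hc1.1 c2 hc2.1 a1 ha1.1 a2 ha2.1
    have hC := key c1 hc1.1 c2 hc2.1 a1 ha1.1 a2 ha2.1 b1 hb1.1 b2 hb2.1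
    have hM := add_mem (add_mem (N.smul_mem (ssign F σ ρ) hA) (N.smul_mem (ssign F τ σ) hB))
      (N.smul_mem (ssign F ρ τ) hC)
    have hX : ssign F σ ρ • (a1 ⊗ₜ[F] (f.compr₂ π) b1 c1)
        + ssign F τ σ • (b1 ⊗ₜ[F] (f.compr₂ π) c1 a1)
        + ssign F ρ τ • (c1 ⊗ₜ[F] (f.compr₂ π) a1 b1) ∈ XFr gV V1 (f.compr₂ π) :=
      Submodule.subset_span ⟨σ, τ, ρ, a1, ha1, b1, hb1, c1, hc1, rfl⟩
    have hS := Submodule.add_mem_sup hX hM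
    simp only [LinearMap.compr₂_apply, smul_sub] at hS
    rw [SetLike.mem_coe]
    convert hS using 1
    abel
  · refine sup_le (sup_le ?_ hVW2) ?_
    · refine Submodule.span_le.2 ?_
      rintro _ ⟨σ, τ, ρ, a, ha, b, hb, c, hc, rfl⟩
      have key : ∀ (x : V) (w : W), x ⊗ₜ[F] (w - π w) ∈ XFr gV ⊤ f := fun x w =>
        hVW2 (tmul_mem_tensSpan trivial (hsplit w).1)
      have hX : ssign F σ ρ • (a ⊗ₜ[F] f b c) + ssign F τ σ • (b ⊗ₜ[F] f c a)
          + ssign F ρ τ • (c ⊗ₜ[F] f a b) ∈ XFr gV ⊤ f :=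
        Submodule.subset_span ⟨σ, τ, ρ, a, ⟨trivial, ha.2⟩, b, ⟨trivial, hb.2⟩, c,
          ⟨trivial, hc.2⟩, rfl⟩
      have hM := add_mem (add_mem
        (Submodule.smul_mem _ (ssign F σ ρ) (key a (f b c)))
        (Submodule.smul_mem _ (ssign F τ σ) (key b (f c a))))
        (Submodule.smul_mem _ (ssign F ρ τ) (key c (f a b)))
      have hS := sub_mem hX hM
      simp only [TensorProduct.tmul_sub, smul_sub] at hS
      rw [SetLike.mem_coe]
      simp only [LinearMap.compr₂_apply]
      convert hS using 1
      abel
    · refine le_trans (Submodule.span_mono ?_) hW1X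
      rintro _ ⟨u, hu, t, ht, rfl⟩
      exact ⟨u, hu, t, trivial, rfl⟩
end
end

section
/- Let f : V × V → W be an object of SSKE of rank (1 | 0), i.e., dim W₀ = 1 and W₁ = 0. Let R = { v ∈ V : f(v, u) = 0 for all u ∈ V } be the radical of f (a graded subspace of V), and let D be a graded complement of R in V (so V = D ⊕ R). If dim D₀ = 2 and dim D₁ = 0, then X_f = R ⊗ W as subspaces of V ⊗ W. -/
open TensorProduct

noncomputable section

variable {F V W L : Type*}

/-- Let `f` be an object of SSKE of rank `(1 | 0)`, let
`R = {v ∈ V : f(v,u) = 0 for all u}` be its radical, and let `D` be a graded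
complement of `R` in `V`. If `dim D₀ = 2` and `dim D₁ = 0`, then
`X_f = R ⊗ W` inside `V ⊗ W`. -/
theorem stmt18 [Field F] [AddCommGroup V] [Module F V] [AddCommGroup W] [Module F W]
    [FiniteDimensional F V] [FiniteDimensional F W] [Nontrivial V] [Nontrivial W]
    (hchar2 : (2 : F) ≠ 0) (hchar3 : (3 : F) ≠ 0)
    (gV : ZMod 2 → Submodule F V) (gW : ZMod 2 → Submodule F W)
    (f : V →ₗ[F] V →ₗ[F] W) (hf : IsSSKE gV gW f)
    (hW0 : Module.finrank F ↥(gW 0) = 1) (hW1 : gW 1 = ⊥)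
    (R : Submodule F V) (hR : ∀ v : V, v ∈ R ↔ ∀ u : V, f v u = 0)
    (D : Submodule F V) (hDg : IsGradedSub gV D) (hDR : IsCompl D R)
    (hD0 : Module.finrank F ↥(D ⊓ gV 0) = 2) (hD1 : D ⊓ gV 1 = ⊥) :
    XFr gV (⊤ : Submodule F V) f = tensSpan R (⊤ : Submodule F W) := by
  have sup : ∀ v : V, ∃ x ∈ gV 0, ∃ y ∈ gV 1, x + y = v := by
    intro v
    have h := hf.internalV.submodule_iSup_eq_top
    have h2 : (⨆ i, gV i) ≤ gV 0 ⊔ gV 1 := by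
      refine iSup_le fun i => ?_
      fin_cases i
      · exact le_sup_left
      · exact le_sup_right
    rw [h] at h2
    exact Submodule.mem_sup.1 (h2 (Submodule.mem_top (x := v)))
  have hDe : D ⊓ gV 0 = D := by
    have h : D = D ⊓ gV 0 ⊔ D ⊓ gV 1 := hDg
    rw [hD1, sup_bot_eq] at h
    exact h.symm
  have hDle : D ≤ gV 0 := by rw [← hDe]; exact inf_le_right
  rw [hDe] at hD0
  have f01 : ∀ u ∈ gV 0, ∀ v ∈ gV 1, f u v = 0 := by
    intro u hu v hv
    have h := hf.grading 0 1 u hu v hv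
    rw [zero_add, hW1] at h
    exact (Submodule.mem_bot F).1 h
  have f10 : ∀ u ∈ gV 1, ∀ v ∈ gV 0, f u v = 0 := by
    intro u hu v hv
    have h := hf.grading 1 0 u hu v hv
    rw [add_zero, hW1] at h
    exact (Submodule.mem_bot F).1 h
  have dec : ∀ v : V, ∃ d ∈ D, ∃ r ∈ R, d + r = v := fun v =>
    Submodule.mem_sup.1 (hDR.sup_eq_top ▸ Submodule.mem_top (x := v))
  have V1R : gV 1 ≤ R := by
    intro v hv
    rw [hR]
    intro u
    obtain ⟨u0, hu0, u1, hu1, rfl⟩ := sup u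
    rw [map_add, f10 v hv u0 hu0, zero_add]
    obtain ⟨d, hd, r, hr, rfl⟩ := dec v
    rw [map_add, LinearMap.add_apply, f01 d (hDle hd) u1 hu1, (hR r).1 hr, add_zero]
  have skew0 : ∀ u ∈ gV 0, ∀ v ∈ gV 0, f u v = - f v u := by
    intro u hu v hv
    have h := hf.skew 0 0 u hu v hv
    simpa [ssign] using h
  have skew : ∀ u v, f u v = - f v u := by
    intro u v
    obtain ⟨u0, hu0, u1, hu1, rfl⟩ := sup u
    obtain ⟨v0, hv0, v1, hv1, rfl⟩ := sup v
    simp only [map_add, LinearMap.add_apply, f01 _ hu0 _ hv1, f01 _ hv0 _ hu1,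
      (hR u1).1 (V1R hu1), (hR v1).1 (V1R hv1), add_zero, skew0 u0 hu0 v0 hv0]
  have fR : ∀ v, ∀ r ∈ R, f v r = 0 := by
    intro v r hr
    rw [skew, (hR r).1 hr, neg_zero]
  have alt : ∀ v, f v v = 0 := by
    intro v
    have h := skew v v
    have h2 : (2 : F) • f v v = 0 := by
      rw [two_smul]
      nth_rewrite 1 [h]
      simp
    exact (smul_eq_zero.1 h2).resolve_left hchar2
  let B := Module.finBasisOfFinrankEq F D hD0
  obtain ⟨p, hp⟩ : ∃ p : V, p = B 0 := ⟨_, rfl⟩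
  obtain ⟨q, hq⟩ : ∃ q : V, q = B 1 := ⟨_, rfl⟩
  have hpD : p ∈ gV 0 := hDle (hp ▸ (B 0).2)
  have hqD : q ∈ gV 0 := hDle (hq ▸ (B 1).2)
  have coord : ∀ v : V, ∃ x y : F, ∃ r ∈ R, v = x • p + y • q + r := by
    intro v
    obtain ⟨d, hd, r, hr, rfl⟩ := dec v
    refine ⟨B.repr ⟨d, hd⟩ 0, B.repr ⟨d, hd⟩ 1, r, hr, ?_⟩
    have h := congrArg (Subtype.val) (B.sum_repr ⟨d, hd⟩)
    rw [Fin.sum_univ_two] at h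
    simp only [Submodule.coe_add, Submodule.coe_smul] at h
    rw [hp, hq, h]
  choose x y r hr hv using coord
  have qp : f q p = - f p q := skew q p
  have ff : ∀ a b, f a b = (x a * y b - y a * x b) • f p q := by
    intro a b
    conv_lhs => rw [hv a, hv b]
    simp only [map_add, LinearMap.add_apply, map_smul, LinearMap.smul_apply, alt,
      (hR _).1 (hr a), fR _ _ (hr b), qp]
    module
  apply le_antisymm
  · refine Submodule.span_le.2 ?_
    rintro z ⟨σ, τ, ρ, a, ⟨-, ha⟩, b, ⟨-, hb⟩, c, ⟨-, hc⟩, rfl⟩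
    refine Submodule.subset_span ⟨(ssign F σ ρ * (x b * y c - y b * x c)) • a
      + (ssign F τ σ * (x c * y a - y c * x a)) • b
      + (ssign F ρ τ * (x a * y b - y a * x b)) • c, ?_, f p q, Submodule.mem_top, ?_⟩
    · rw [hR]
      intro u
      have key : ∀ e : ZMod 2, ∀ v ∈ gV e, e = 0 ∨ v ∈ R := by
        intro e v h
        fin_cases e
        · exact Or.inl rfl
        · exact Or.inr (V1R h)
      have e1 : ∀ (s t : F) (v : V), f ((s * t) • v) u = s • t • f v u := by
        intro s t v
        rw [map_smul, LinearMap.smul_apply, mul_smul]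
      have sw : ∀ (i j k l : V), (x i * y j - y i * x j) • f k l
          = (x k * y l - y k * x l) • f i j := by
        intro i j k l
        rw [ff i j, ff k l]
        module
      simp only [map_add, LinearMap.add_apply, e1]
      rcases key σ a ha with rfl | ha'
      · rcases key τ b hb with rfl | hb'
        · rcases key ρ c hc with rfl | hc'
          · simp only [ff _ u, ssign]
            simp only [mul_zero, ZMod.val_zero, pow_zero]
            module
          · rw [sw b c, sw c a, (hR c).1 hc', (hR c).1 hc', fR b c hc']
            simp
        · rw [sw b c, sw a b, (hR b).1 hb', (hR b).1 hb', fR a b hb']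
          simp
      · rw [sw c a, sw a b, (hR a).1 ha', (hR a).1 ha', fR c a ha']
        simp
    · rw [ff b c, ff c a, ff a b]
      simp only [TensorProduct.tmul_smul, TensorProduct.add_tmul, TensorProduct.smul_tmul',
        mul_smul]
  · refine Submodule.span_le.2 ?_
    rintro z ⟨v, hvR, t, -, rfl⟩
    have ht : t ∈ Submodule.span F {f p q} := by
      have h : (⊤ : Submodule F W) ≤ Submodule.span F {f p q} := by
        rw [← hf.span_eq_top, Submodule.span_le]
        rintro w ⟨a, b, rfl⟩
        rw [ff a b]
        exact Submodule.smul_mem _ _ (Submodule.mem_span_singleton_self _)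
      exact h Submodule.mem_top
    obtain ⟨s, rfl⟩ := Submodule.mem_span_singleton.1 ht
    have gen : ∀ e : ZMod 2, ∀ v ∈ gV e, v ∈ R → v ⊗ₜ[F] f p q ∈ XFr gV ⊤ f := by
      intro e v he hvR
      refine Submodule.subset_span ⟨e, 0, 0, v, ⟨Submodule.mem_top, he⟩, p,
        ⟨Submodule.mem_top, hpD⟩, q, ⟨Submodule.mem_top, hqD⟩, ?_⟩
      rw [fR q v hvR, (hR v).1 hvR]
      simp [ssign]
    obtain ⟨v0, h0, v1, h1, rfl⟩ := sup v
    have h1R := V1R h1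
    have h0R : v0 ∈ R := by simpa using R.sub_mem hvR h1R
    rw [TensorProduct.tmul_smul, TensorProduct.add_tmul]
    exact Submodule.smul_mem _ _ (Submodule.add_mem _ (gen 0 v0 h0 h0R) (gen 1 v1 h1 h1R))
end
end
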